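/- Let R be a commutative ring and let η, ρ ∈ R satisfy η * (2 + η * ρ) = 0. Let M be an R-module such that (i) every element of M is annihilated by some power of ρ (for each x ∈ M there is n with ρ^n • x = 0), and (ii) multiplication by η is surjective on M (for each x ∈ M there is y ∈ M with x = η • y). Then every element of M is annihilated by a power of 2: for each x ∈ M there exists n with 2^n • x = 0. In fact, if ρ^n • x = 0 and x = η^n • y for some y, then 2^n • x = 0. -/

import Mathlib

/-!
The relation says that `2 + ηρ` annihilates `ηM`, so on `ηM` multiplication by `2` is
multiplication by `-ηρ`. Hence a power of `ρ` annihilating an element of `ηM` makes the same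
power of `2` annihilate it.
-/

/-- Over a ring this is `a ^ n • x = (-b) ^ n • x`; the induction replaces `x` by `b • x` instead,
so that no subtraction occurs. -/
theorem pow_smul_eq_zero_of_add_smul_eq_zero {R M : Type*} [Semiring R] [AddCommMonoid M]
    [Module R M] {a b : R} (hab : Commute a b) {x : M} {n : ℕ}
    (hx : (a + b) • x = 0) (hb : b ^ n • x = 0) : a ^ n • x = 0 := by
  induction n generalizing x with
  | zero => simpa only [pow_zero] using hb
  | succ n ih =>
    have hbx : (a + b) • b • x = 0 := by
      rw [smul_smul, (hab.add_left (Commute.refl b)).eq, mul_smul, hx, smul_zero]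
    have habx : a ^ n • b • x = 0 := ih hbx (by rwa [smul_smul, ← pow_succ])
    calc a ^ (n + 1) • x = a ^ n • a • x + a ^ n • b • x := by
          rw [habx, add_zero, pow_succ, mul_smul]
      _ = a ^ n • (a + b) • x := by rw [add_smul, smul_add]
      _ = 0 := by rw [hx, smul_zero]

theorem two_pow_torsion_of_rho_torsion_eta_divisible_general {R M : Type*} [CommSemiring R]
    [AddCommMonoid M] [Module R M] {η ρ : R} (h : η * (2 + η * ρ) = 0) {x y : M} {n : ℕ}
    (hx : ρ ^ n • x = 0) (hxy : x = η • y) : (2 : R) ^ n • x = 0 := by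
  have two_add_smul : (2 + η * ρ) • x = 0 := by
    rw [hxy, smul_smul, mul_comm, h, zero_smul]
  have pow_mul_smul : (η * ρ) ^ n • x = 0 := by
    rw [mul_pow, mul_smul, hx, smul_zero]
  exact pow_smul_eq_zero_of_add_smul_eq_zero (Commute.all _ _) two_add_smul pow_mul_smul

/-- Let `R` be a commutative ring with elements `η`, `ρ` satisfying the Milnor–Witt
relation `η * (2 + η * ρ) = 0`, and let `M` be an `R`-module in which every element is
annihilated by a power of `ρ` and on which multiplication by `η` is surjective.  Then
every element of `M` is annihilated by a power of `2`; in fact if `ρ^n • x = 0` and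
`x = η^n • y` then `2^n • x = 0`. -/
theorem two_pow_torsion_of_rho_torsion_eta_divisible
    (R : Type*) [CommRing R] (η ρ : R) (h : η * (2 + η * ρ) = 0)
    (M : Type*) [AddCommGroup M] [Module R M]
    (h1 : ∀ x : M, ∃ n : ℕ, ρ ^ n • x = 0)
    (h2 : ∀ x : M, ∃ y : M, x = η • y) :
    (∀ x : M, ∃ n : ℕ, (2 : R) ^ n • x = 0) ∧
    (∀ (x y : M) (n : ℕ), ρ ^ n • x = 0 → x = η ^ n • y → (2 : R) ^ n • x = 0) := by
  refine ⟨fun x => ?_, fun x y n hx hxy => ?_⟩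
  · obtain ⟨n, hx⟩ := h1 x
    obtain ⟨y, hxy⟩ := h2 x
    exact ⟨n, two_pow_torsion_of_rho_torsion_eta_divisible_general h hx hxy⟩
  · cases n with
    | zero => simpa only [pow_zero] using hx
    | succ n =>
      rw [pow_succ', mul_smul] at hxy
      exact two_pow_torsion_of_rho_torsion_eta_divisible_general h hx hxy
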